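/- Let (F_0, a) be initial data for the completion problem in ℂ^d with k ≥ d, let f : [0,∞) → [0,∞) be strictly convex, and let F = (F_0, G) ∈ C_a(F_0) be a global minimizer of P_f on C_a(F_0), with associated block structure 0 = s_0 < s_1 < … < s_p and constants c_1 > … > c_p > 0 as in the structure theorem (so that λ + μ = (c_1·1_{s_1},…,c_p·1_{s_p−s_{p−1}}, λ_{s_p+1},…,λ_d)). Then s_{p−1} = min{s ∈ {0,1,…,d−1} : s is feasible}. -/

import Mathlib

open Finset
open scoped ComplexOrder

noncomputable def sortAsc {m : ℕ} (x : Fin m → ℝ) : Fin m → ℝ :=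
  x ∘ Tuple.sort x

noncomputable def sortDesc {m : ℕ} (x : Fin m → ℝ) : Fin m → ℝ :=
  fun i => (x ∘ Tuple.sort x) i.rev

noncomputable def pad {k : ℕ} (x : Fin k → ℝ) (m : ℕ) : Fin m → ℝ :=
  fun i => if h : (i : ℕ) < k then x ⟨i, h⟩ else 0

/-- `MajorizedBy x y` means `x ≺ y`. -/
def MajorizedBy {m : ℕ} (x y : Fin m → ℝ) : Prop :=
  (∀ j : Fin m, ∑ i ∈ Finset.Iic j, sortDesc x i ≤ ∑ i ∈ Finset.Iic j, sortDesc y i) ∧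
    ∑ i, x i = ∑ i, y i

/-- Majorization of vectors of possibly different lengths, padding with zeros. -/
def MajorizedByPad {k m : ℕ} (x : Fin k → ℝ) (y : Fin m → ℝ) : Prop :=
  MajorizedBy (pad x (max k m)) (pad y (max k m))

/-- The frame operator `S_F = ∑ f_i f_i^*` of a finite sequence of vectors in `ℂ^d`. -/
noncomputable def frameOp {d n : ℕ} (F : Fin n → Fin d → ℂ) : Matrix (Fin d) (Fin d) ℂ :=
  ∑ l, Matrix.vecMulVec (F l) (star (F l))

/-- The squared norm `‖g‖²` of a vector in `ℂ^d`. -/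
noncomputable def normSqVec {d : ℕ} (g : Fin d → ℂ) : ℝ :=
  ∑ i, Complex.normSq (g i)

open scoped Classical in
/-- Eigenvalues of a (Hermitian) matrix arranged in decreasing order. -/
noncomputable def eigsDesc {d : ℕ} (S : Matrix (Fin d) (Fin d) ℂ) : Fin d → ℝ :=
  if h : S.IsHermitian then sortDesc h.eigenvalues else 0

open scoped Classical in
/-- Eigenvalues of a (Hermitian) matrix arranged in increasing order. -/
noncomputable def eigsAsc {d : ℕ} (S : Matrix (Fin d) (Fin d) ℂ) : Fin d → ℝ :=
  if h : S.IsHermitian then sortAsc h.eigenvalues else 0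

/-- `Γ_d(a)`: non-increasing nonnegative vectors in `ℝ^d` majorizing `a`. -/
def Gamma {k : ℕ} (d : ℕ) (a : Fin k → ℝ) : Set (Fin d → ℝ) :=
  {μ | Antitone μ ∧ (∀ i, 0 ≤ μ i) ∧ MajorizedByPad a μ}

/-- The convex potential `P_f = tr f(S) = ∑ f(λ_i(S))`. -/
noncomputable def potential {d : ℕ} (f : ℝ → ℝ) (S : Matrix (Fin d) (Fin d) ℂ) : ℝ :=
  ∑ i, f (eigsDesc S i)

/-- Final averages `Q_{j,r} = (1/(r-j)) (∑_{i=j+1}^k a_i + ∑_{i=j+1}^r λ_i)` (1-based). -/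
noncomputable def finalAvg {d k : ℕ} (lam : Fin d → ℝ) (a : Fin k → ℝ) (j r : ℕ) : ℝ :=
  ((∑ i : Fin k, if j ≤ (i : ℕ) then a i else 0) +
      (∑ i : Fin d, if j ≤ (i : ℕ) ∧ (i : ℕ) < r then lam i else 0)) / ((r : ℝ) - (j : ℝ))

/-- Initial averages: `initAvg lam a lo hi = P_{lo+1,hi}` (1-based), i.e. the average of
`h_i = λ_i + a_i` over the (0-based) index window `[lo, hi)`. -/
noncomputable def initAvg {d k : ℕ} (lam : Fin d → ℝ) (a : Fin k → ℝ) (lo hi : ℕ) : ℝ :=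
  ((∑ i : Fin d, if lo ≤ (i : ℕ) ∧ (i : ℕ) < hi then lam i else 0) +
      (∑ i : Fin k, if lo ≤ (i : ℕ) ∧ (i : ℕ) < hi then a i else 0)) / ((hi : ℝ) - (lo : ℝ))

/-- 1-based access to a vector indexed by `Fin d`. -/
noncomputable def get1 {d : ℕ} (lam : Fin d → ℝ) (i : ℕ) : ℝ :=
  if h : i - 1 < d then lam ⟨i - 1, h⟩ else 0

/-- The index `s` is feasible for the pair `(λ, a)`: the unique vector
`ν_s = (c·1_{r-s}, λ_{r+1},…,λ_d)` determined by the truncated data satisfies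
`a^s ≺ ν_s - λ^s`. -/
def FeasibleIdx {d k : ℕ} (lam : Fin d → ℝ) (a : Fin k → ℝ) (s : ℕ) : Prop :=
  ∃ r : ℕ, ∃ c : ℝ, s < r ∧ r ≤ d ∧ 0 < c ∧
    (∀ i : Fin d, s ≤ (i : ℕ) → (i : ℕ) < r → lam i ≤ c) ∧
    (∀ hrd : r < d, c ≤ lam ⟨r, hrd⟩) ∧
    ((r : ℝ) - (s : ℝ)) * c =
      (∑ i : Fin d, if s ≤ (i : ℕ) ∧ (i : ℕ) < r then lam i else 0) +
        (∑ i : Fin k, if s ≤ (i : ℕ) then a i else 0) ∧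
    MajorizedByPad (fun i : Fin (k - s) => a ⟨s + (i : ℕ), by have := i.isLt; omega⟩)
      (fun i : Fin (d - s) =>
        if s + (i : ℕ) < r then c - lam ⟨s + (i : ℕ), by have := i.isLt; omega⟩ else 0)


noncomputable def pre {n : ℕ} (x : Fin n → ℝ) (m : ℕ) : ℝ :=
  ∑ i : Fin n, if (i : ℕ) < m then x i else 0

noncomputable def mv {n : ℕ} (x : Fin n → ℝ) (i j : Fin n) (δ : ℝ) : Fin n → ℝ :=
  fun l => x l - (if l = i then δ else 0) + (if l = j then δ else 0)

lemma pre_mv {n : ℕ} (x : Fin n → ℝ) (i j : Fin n) (δ : ℝ) (m : ℕ) :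
    pre (mv x i j δ) m = pre x m - (if (i : ℕ) < m then δ else 0)
      + (if (j : ℕ) < m then δ else 0) := by
  unfold pre mv
  have h : ∀ l : Fin n, (if (l : ℕ) < m then
      x l - (if l = i then δ else 0) + (if l = j then δ else 0) else 0)
      = (if (l : ℕ) < m then x l else 0) - (if l = i then (if (i : ℕ) < m then δ else 0) else 0)
        + (if l = j then (if (j : ℕ) < m then δ else 0) else 0) := by
    intro l
    by_cases h1 : l = i
    · subst h1
      by_cases h2 : l = j
      · subst h2
        by_cases h3 : (l : ℕ) < m <;> simp [h3]
      · by_cases h3 : (l : ℕ) < m <;> simp [h2, h3]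
    · by_cases h2 : l = j
      · subst h2
        by_cases h3 : (l : ℕ) < m <;> simp [h1, h3]
      · by_cases h3 : (l : ℕ) < m <;> simp [h1, h2, h3]
  rw [Finset.sum_congr rfl (fun l _ => h l), Finset.sum_add_distrib, Finset.sum_sub_distrib]
  simp

lemma sum_mv {n : ℕ} (x : Fin n → ℝ) (i j : Fin n) (δ : ℝ) :
    ∑ l, mv x i j δ l = ∑ l, x l := by
  unfold mv
  rw [Finset.sum_add_distrib, Finset.sum_sub_distrib]
  simp

lemma pre_top {n : ℕ} (x : Fin n → ℝ) (m : ℕ) (h : n ≤ m) : pre x m = ∑ i, x i := by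
  unfold pre
  exact Finset.sum_congr rfl (fun i _ => if_pos (lt_of_lt_of_le i.2 h))

lemma pre_sub {n : ℕ} (x a : Fin n → ℝ) (m : ℕ) :
    pre x m - pre a m = ∑ i : Fin n, if (i : ℕ) < m then x i - a i else 0 := by
  unfold pre
  rw [← Finset.sum_sub_distrib]
  exact Finset.sum_congr rfl (fun i _ => by split_ifs <;> simp)

theorem hlp {n : ℕ} (P : (Fin n → ℝ) → Prop)
    (hP : ∀ (x : Fin n → ℝ) (i j : Fin n) (δ : ℝ), i ≠ j → 0 ≤ δ → δ ≤ x i - x j → P x →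
      P (mv x i j δ))
    (a : Fin n → ℝ) (ha : Antitone a) :
    ∀ (N : ℕ) (x : Fin n → ℝ), (Finset.univ.filter (fun l => x l ≠ a l)).card ≤ N → P x →
      (∀ m, pre a m ≤ pre x m) → ∑ l, a l = ∑ l, x l → P a := by
  intro N
  induction N with
  | zero =>
    intro x hc hx _ _
    have : x = a := by
      funext l
      by_contra h
      have : l ∈ Finset.univ.filter (fun l => x l ≠ a l) := by simp [h]
      rw [Nat.le_zero, Finset.card_eq_zero] at hc
      simp [hc] at this
    exact this ▸ hx
  | succ N ih =>
    intro x hc hx hpre hsum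
    by_cases hxa : x = a
    · exact hxa ▸ hx
    have hex : ∃ j, x j < a j := by
      by_contra h
      push Not at h
      apply hxa
      funext l
      have := (Finset.sum_eq_sum_iff_of_le (s := Finset.univ) (fun i _ => h i)).1 hsum
      exact (this l (Finset.mem_univ _)).symm
    obtain ⟨j, hj, hjmin⟩ : ∃ j, x j < a j ∧ ∀ l, l < j → a l ≤ x l := by
      have hne : (Finset.univ.filter (fun l => x l < a l)).Nonempty := by
        obtain ⟨j, hj⟩ := hex
        exact ⟨j, by simp [hj]⟩
      refine ⟨_, (Finset.mem_filter.1 (Finset.min'_mem _ hne)).2, ?_⟩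
      intro l hl
      by_contra h
      push Not at h
      have := Finset.min'_le (Finset.univ.filter (fun l => x l < a l)) l (by simp [h])
      exact absurd hl (not_lt.2 this)
    obtain ⟨i, hij, hi⟩ : ∃ i, i < j ∧ a i < x i := by
      by_contra h
      push Not at h
      have h1 := hpre ((j : ℕ) + 1)
      have h2 := pre_sub x a ((j : ℕ) + 1)
      have h3 : (∑ i : Fin n, if (i : ℕ) < (j : ℕ) + 1 then x i - a i else 0) < 0 := by
        refine lt_of_lt_of_eq (b := ∑ _l : Fin n, (0 : ℝ)) ?_ (by simp)
        apply Finset.sum_lt_sum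
        · intro l _
          split_ifs with hl
          · rcases lt_or_eq_of_le (Fin.le_def.2 (by omega) : l ≤ j) with h4 | h4
            · linarith [h l h4]
            · subst h4; linarith
          · exact le_refl (0:ℝ)
        · exact ⟨j, Finset.mem_univ _, by simp [hj]⟩
      linarith
    set δ := min (x i - a i) (a j - x j) with hδ
    have hδ0 : 0 < δ := lt_min (by linarith) (by linarith)
    have hδ1 : δ ≤ x i - a i := min_le_left _ _
    have hδ2 : δ ≤ a j - x j := min_le_right _ _
    have haij := ha hij.le
    have hne : i ≠ j := hij.ne
    apply ih (mv x i j δ)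
    · have hlt : (Finset.univ.filter (fun l => mv x i j δ l ≠ a l)).card <
          (Finset.univ.filter (fun l => x l ≠ a l)).card := by
        apply Finset.card_lt_card
        rw [Finset.ssubset_iff_of_subset]
        · rcases min_choice (x i - a i) (a j - x j) with h | h
          · refine ⟨i, by simp [hi.ne'], ?_⟩
            have : mv x i j δ i = a i := by
              simp only [mv, if_true, if_neg hne]
              rw [hδ, h]; ring
            simp [this]
          · refine ⟨j, by simp [hj.ne], ?_⟩
            have : mv x i j δ j = a j := by
              simp only [mv, if_true, if_neg hne.symm]
              rw [hδ, h]; ring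
            simp [this]
        · intro l
          simp only [Finset.mem_filter, Finset.mem_univ, true_and]
          intro hl
          by_cases h1 : l = i
          · subst h1; exact hi.ne'
          by_cases h2 : l = j
          · subst h2; exact hj.ne
          simpa [mv, h1, h2] using hl
      omega
    · exact hP x i j δ hne hδ0.le (by linarith) hx
    · intro m
      rw [pre_mv]
      by_cases h1 : (i : ℕ) < m
      · by_cases h2 : (j : ℕ) < m
        · simp [h1, h2, hpre m]
        · simp only [h1, h2, if_true, if_false]
          have h3 := pre_sub x a m
          have h4 : x i - a i ≤ ∑ i : Fin n, if (i : ℕ) < m then x i - a i else 0 := by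
            have := Finset.single_le_sum (s := (Finset.univ : Finset (Fin n)))
              (f := fun i : Fin n => if (i : ℕ) < m then x i - a i else 0)
              (fun l _ => by
                split_ifs with hl
                · have := hjmin l (Fin.lt_def.2 (by omega))
                  linarith
                · exact le_rfl) (Finset.mem_univ i)
            simpa [h1] using this
          linarith
      · have h2 : ¬ (j : ℕ) < m := by
          have := Fin.lt_def.1 hij; omega
        simp [h1, h2, hpre m]
    · rw [sum_mv]; exact hsum

lemma conv_two {f : ℝ → ℝ} (hf : ConvexOn ℝ (Set.Ici 0) f) {u v δ : ℝ} (hv : 0 ≤ v)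
    (h0 : 0 ≤ δ) (h1 : δ ≤ u - v) : f (u - δ) + f (v + δ) ≤ f u + f v := by
  rcases eq_or_lt_of_le (h0.trans h1) with h | h
  · have : δ = 0 := by linarith
    simp [this]
  · have hu : (0:ℝ) ≤ u := by linarith
    have e1 := hf.2 (show u ∈ Set.Ici (0:ℝ) from hu) (show v ∈ Set.Ici (0:ℝ) from hv)
      (show (0:ℝ) ≤ 1 - δ / (u - v) by rw [sub_nonneg, div_le_one h]; exact h1) (show (0:ℝ) ≤ δ / (u - v) by positivity) (by ring)
    have e2 := hf.2 (show u ∈ Set.Ici (0:ℝ) from hu) (show v ∈ Set.Ici (0:ℝ) from hv)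
      (show (0:ℝ) ≤ δ / (u - v) by positivity)
      (show (0:ℝ) ≤ 1 - δ / (u - v) by rw [sub_nonneg, div_le_one h]; exact h1) (by ring)
    simp only [smul_eq_mul] at e1 e2
    have h2 : u - v ≠ 0 := h.ne'
    have r1 : (1 - δ / (u - v)) * u + δ / (u - v) * v = u - δ := by field_simp; ring
    have r2 : δ / (u - v) * u + (1 - δ / (u - v)) * v = v + δ := by field_simp; ring
    rw [r1] at e1
    rw [r2] at e2
    linarith

lemma sconv_two {f : ℝ → ℝ} (hf : StrictConvexOn ℝ (Set.Ici 0) f) {u v δ : ℝ} (hv : 0 ≤ v)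
    (h0 : 0 < δ) (h1 : δ < u - v) : f (u - δ) + f (v + δ) < f u + f v := by
  have h : 0 < u - v := h0.trans h1
  have hu : (0:ℝ) ≤ u := by linarith
  have e1 := hf.2 (show u ∈ Set.Ici (0:ℝ) from hu) (show v ∈ Set.Ici (0:ℝ) from hv)
    (by intro h; linarith)
    (show (0:ℝ) < 1 - δ / (u - v) by rw [sub_pos, div_lt_one h]; exact h1) (show (0:ℝ) < δ / (u - v) by positivity) (by ring)
  have e2 := hf.2 (show u ∈ Set.Ici (0:ℝ) from hu) (show v ∈ Set.Ici (0:ℝ) from hv)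
    (by intro h; linarith)
    (show (0:ℝ) < δ / (u - v) by positivity)
      (show (0:ℝ) < 1 - δ / (u - v) by rw [sub_pos, div_lt_one h]; exact h1) (by ring)
  simp only [smul_eq_mul] at e1 e2
  have h2 : u - v ≠ 0 := h.ne'
  have r1 : (1 - δ / (u - v)) * u + δ / (u - v) * v = u - δ := by field_simp; ring
  have r2 : δ / (u - v) * u + (1 - δ / (u - v)) * v = v + δ := by field_simp; ring
  rw [r1] at e1
  rw [r2] at e2
  linarith

lemma sum_f_mv {n : ℕ} (f : ℝ → ℝ) (x : Fin n → ℝ) (i j : Fin n) (hij : i ≠ j) (δ : ℝ) :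
    ∑ l, f (mv x i j δ l) = ∑ l, f (x l) + (f (x i - δ) + f (x j + δ) - f (x i) - f (x j)) := by
  have h : ∀ l, f (mv x i j δ l) = f (x l) + (if l = i then f (x i - δ) - f (x i) else 0)
      + (if l = j then f (x j + δ) - f (x j) else 0) := by
    intro l
    by_cases h1 : l = i
    · subst h1; simp [mv, hij]
    · by_cases h2 : l = j
      · subst h2; simp [mv, h1]
      · simp [mv, h1, h2]
  rw [Finset.sum_congr rfl (fun l _ => h l), Finset.sum_add_distrib, Finset.sum_add_distrib]
  simp
  ring

theorem karamata {n : ℕ} {f : ℝ → ℝ} (hf : ConvexOn ℝ (Set.Ici 0) f) (a x : Fin n → ℝ)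
    (ha : Antitone a) (hx : ∀ i, 0 ≤ x i) (h : ∀ m, pre a m ≤ pre x m)
    (hs : ∑ l, a l = ∑ l, x l) : ∑ l, f (a l) ≤ ∑ l, f (x l) := by
  have := hlp (fun z => (∀ i, 0 ≤ z i) ∧ ∑ l, f (z l) ≤ ∑ l, f (x l)) ?_ a ha _ x le_rfl
    ⟨hx, le_rfl⟩ h hs
  · exact this.2
  · rintro z i j δ hij h0 h1 ⟨hz, hz2⟩
    constructor
    · intro l
      unfold mv
      have := hz l
      have := hz i
      have := hz j
      by_cases e1 : l = i
      · subst e1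
        simp [hij]; linarith
      · by_cases e2 : l = j
        · subst e2; simp [e1]; linarith
        · simp [e1, e2]; linarith
    · rw [sum_f_mv f z i j hij]
      have := conv_two hf (hz j) h0 h1
      linarith

open Matrix in
noncomputable def qf {d : ℕ} (A : Matrix (Fin d) (Fin d) ℂ) (v : Fin d → ℂ) : ℝ :=
  (star v ⬝ᵥ (A *ᵥ v)).re

open Matrix in
def Dec {d : ℕ} (A : Matrix (Fin d) (Fin d) ℂ) (α : Fin d → ℝ) : Prop :=
  ∃ U : Matrix (Fin d) (Fin d) ℂ, U * Uᴴ = 1 ∧ Uᴴ * U = 1 ∧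
    A = U * Matrix.diagonal (fun i => (α i : ℂ)) * Uᴴ

open Matrix

lemma qf_add {d : ℕ} (A B : Matrix (Fin d) (Fin d) ℂ) (v : Fin d → ℂ) :
    qf (A + B) v = qf A v + qf B v := by
  simp [qf, Matrix.add_mulVec, dotProduct_add]

lemma qf_sub {d : ℕ} (A B : Matrix (Fin d) (Fin d) ℂ) (v : Fin d → ℂ) :
    qf (A - B) v = qf A v - qf B v := by
  simp [qf, Matrix.sub_mulVec, dotProduct_sub]

lemma qf_conj {d : ℕ} (U : Matrix (Fin d) (Fin d) ℂ) (α : Fin d → ℝ) (v : Fin d → ℂ) :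
    qf (U * Matrix.diagonal (fun i => (α i : ℂ)) * Uᴴ) v
      = ∑ i, α i * Complex.normSq ((Uᴴ *ᵥ v) i) := by
  unfold qf
  rw [← Matrix.mulVec_mulVec, ← Matrix.mulVec_mulVec, Matrix.dotProduct_mulVec]
  have : star v ᵥ* U = star (Uᴴ *ᵥ v) := by
    rw [Matrix.star_mulVec, Matrix.conjTranspose_conjTranspose]
  rw [this]
  simp only [dotProduct, Matrix.mulVec_diagonal, Complex.re_sum]
  refine Finset.sum_congr rfl (fun i _ => ?_)
  simp [Complex.normSq_apply]
  ring

lemma qf_one {d : ℕ} (v : Fin d → ℂ) : qf 1 v = ∑ i, Complex.normSq (v i) := by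
  have := qf_conj 1 (fun _ => 1) v
  simpa using this

lemma norm_unit {d : ℕ} (U : Matrix (Fin d) (Fin d) ℂ) (hU : U * Uᴴ = 1) (v : Fin d → ℂ) :
    ∑ i, Complex.normSq ((Uᴴ *ᵥ v) i) = ∑ i, Complex.normSq (v i) := by
  have := qf_conj U (fun _ => 1) v
  rw [← qf_one v]
  simp [hU] at this
  exact this.symm

theorem weyl {d : ℕ} {A B : Matrix (Fin d) (Fin d) ℂ} {α β : Fin d → ℝ}
    (hA : Dec A α) (hB : Dec B β) (hα : Antitone α) (hβ : Antitone β)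
    (h : ∀ v, qf A v ≤ qf B v) (i : Fin d) : α i ≤ β i := by
  obtain ⟨U, hU1, hU2, rfl⟩ := hA
  obtain ⟨V, hV1, hV2, rfl⟩ := hB
  set M : Matrix (Fin d) (Fin d) ℂ :=
    fun j l => if j = i then 0 else if i < j then Uᴴ j l else Vᴴ j l with hM
  have hdet : M.det = 0 := by
    apply Matrix.det_eq_zero_of_row_eq_zero i
    intro l
    simp [hM]
  obtain ⟨v, hv0, hv⟩ := Matrix.exists_mulVec_eq_zero_iff.2 hdet
  have hUv : ∀ j, i < j → (Uᴴ *ᵥ v) j = 0 := by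
    intro j hj
    have := congrFun hv j
    rw [← Pi.zero_apply (M := fun _ => ℂ) j, ← this]
    simp [Matrix.mulVec, dotProduct, hM, hj, hj.ne']
  have hVv : ∀ j, j < i → (Vᴴ *ᵥ v) j = 0 := by
    intro j hj
    have := congrFun hv j
    rw [← Pi.zero_apply (M := fun _ => ℂ) j, ← this]
    simp [Matrix.mulVec, dotProduct, hM, hj.ne, not_lt.2 hj.le]
  have hpos : 0 < ∑ i, Complex.normSq (v i) := by
    obtain ⟨l, hl⟩ := Function.ne_iff.1 hv0
    exact Finset.sum_pos' (fun _ _ => Complex.normSq_nonneg _)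
      ⟨l, Finset.mem_univ _, Complex.normSq_pos.2 hl⟩
  have h1 : α i * ∑ i, Complex.normSq (v i) ≤
      qf (U * Matrix.diagonal (fun i => (α i : ℂ)) * Uᴴ) v := by
    rw [qf_conj, ← norm_unit U hU1 v, Finset.mul_sum]
    apply Finset.sum_le_sum
    intro j _
    by_cases hj : i < j
    · simp [hUv j hj]
    · exact mul_le_mul_of_nonneg_right (hα (not_lt.1 hj)) (Complex.normSq_nonneg _)
  have h2 : qf (V * Matrix.diagonal (fun i => (β i : ℂ)) * Vᴴ) v ≤
      β i * ∑ i, Complex.normSq (v i) := by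
    rw [qf_conj, ← norm_unit V hV1 v, Finset.mul_sum]
    apply Finset.sum_le_sum
    intro j _
    by_cases hj : j < i
    · simp [hVv j hj]
    · exact mul_le_mul_of_nonneg_right (hβ (not_lt.1 hj)) (Complex.normSq_nonneg _)
  exact le_of_mul_le_mul_right ((h1.trans (h v)).trans h2) hpos

lemma dec_perm {d : ℕ} {A : Matrix (Fin d) (Fin d) ℂ} {α : Fin d → ℝ} (hA : Dec A α)
    (σ : Equiv.Perm (Fin d)) : Dec A (α ∘ σ) := by
  obtain ⟨U, hU1, hU2, rfl⟩ := hA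
  refine ⟨U.submatrix id σ, ?_, ?_, ?_⟩
  · rw [Matrix.conjTranspose_submatrix, Matrix.submatrix_mul_equiv, hU1]; rfl
  · rw [Matrix.conjTranspose_submatrix, ← Matrix.submatrix_mul _ _ _ _ _ Function.bijective_id, hU2]
    exact Matrix.submatrix_one_equiv σ
  · have : Matrix.diagonal (fun i => (((α ∘ σ) i : ℝ) : ℂ)) =
        (Matrix.diagonal (fun i => (α i : ℂ))).submatrix σ σ := by
      rw [Matrix.submatrix_diagonal_equiv]; rfl
    rw [this, Matrix.conjTranspose_submatrix, Matrix.submatrix_mul_equiv,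
      Matrix.submatrix_mul_equiv, Matrix.submatrix_id_id]

lemma dec_herm {d : ℕ} {A : Matrix (Fin d) (Fin d) ℂ} (hA : A.IsHermitian) :
    Dec A hA.eigenvalues := by
  refine ⟨hA.eigenvectorUnitary, ?_, ?_, ?_⟩
  · rw [← Matrix.star_eq_conjTranspose]; exact Unitary.coe_mul_star_self _
  · rw [← Matrix.star_eq_conjTranspose]; exact Unitary.coe_star_mul_self _
  · rw [← Matrix.star_eq_conjTranspose]
    have := hA.spectral_theorem
    rw [Unitary.conjStarAlgAut_apply] at this
    exact this

lemma Dec.herm {d : ℕ} {A : Matrix (Fin d) (Fin d) ℂ} {α : Fin d → ℝ} (hA : Dec A α) :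
    A.IsHermitian := by
  obtain ⟨U, hU1, hU2, rfl⟩ := hA
  apply Matrix.isHermitian_mul_mul_conjTranspose
  apply Matrix.isHermitian_diagonal_of_self_adjoint
  ext i
  simp

lemma sortDesc_eq {m : ℕ} (x : Fin m → ℝ) :
    sortDesc x = x ∘ (Fin.revPerm.trans (Tuple.sort x)) := rfl

lemma sortDesc_anti {m : ℕ} (x : Fin m → ℝ) : Antitone (sortDesc x) := by
  intro i j hij
  exact Tuple.monotone_sort x (Fin.rev_le_rev.2 hij)

lemma dec_eigsDesc {d : ℕ} {A : Matrix (Fin d) (Fin d) ℂ} (hA : A.IsHermitian) :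
    Dec A (eigsDesc A) := by
  unfold eigsDesc
  rw [dif_pos hA, sortDesc_eq]
  exact dec_perm (dec_herm hA) _

lemma dec_eigsAsc {d : ℕ} {A : Matrix (Fin d) (Fin d) ℂ} (hA : A.IsHermitian) :
    Dec A (eigsAsc A) := by
  unfold eigsAsc
  rw [dif_pos hA]
  exact dec_perm (dec_herm hA) _

lemma eigsDesc_anti {d : ℕ} {A : Matrix (Fin d) (Fin d) ℂ} : Antitone (eigsDesc A) := by
  unfold eigsDesc
  split_ifs
  · exact sortDesc_anti _
  · exact antitone_const

lemma eigsAsc_mono {d : ℕ} {A : Matrix (Fin d) (Fin d) ℂ} : Monotone (eigsAsc A) := by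
  unfold eigsAsc
  split_ifs
  · exact Tuple.monotone_sort _
  · exact monotone_const

lemma dec_unique {d : ℕ} {A : Matrix (Fin d) (Fin d) ℂ} {α β : Fin d → ℝ} (h1 : Dec A α)
    (h2 : Dec A β) (hα : Antitone α) (hβ : Antitone β) : α = β :=
  funext fun i => le_antisymm (weyl h1 h2 hα hβ (fun _ => le_rfl) i)
    (weyl h2 h1 hβ hα (fun _ => le_rfl) i)

lemma dec_potential {d : ℕ} {A : Matrix (Fin d) (Fin d) ℂ} {α : Fin d → ℝ} (h : Dec A α)
    (f : ℝ → ℝ) : potential f A = ∑ i, f (α i) := by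
  have h1 : Dec A (sortDesc α) := by rw [sortDesc_eq]; exact dec_perm h _
  have := dec_unique h1 (dec_eigsDesc h.herm) (sortDesc_anti _) eigsDesc_anti
  unfold potential
  rw [← this, sortDesc_eq]
  exact Equiv.sum_comp (Fin.revPerm.trans (Tuple.sort α)) (fun i => f (α i))

lemma dec_trace {d : ℕ} {A : Matrix (Fin d) (Fin d) ℂ} {α : Fin d → ℝ} (h : Dec A α) :
    A.trace.re = ∑ i, α i := by
  obtain ⟨U, hU1, hU2, rfl⟩ := h
  rw [Matrix.trace_mul_cycle, hU2, one_mul, Matrix.trace_diagonal]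
  simp

lemma dec_nonneg {d : ℕ} {A : Matrix (Fin d) (Fin d) ℂ} {α : Fin d → ℝ} (h : Dec A α)
    (hq : ∀ v, 0 ≤ qf A v) (i : Fin d) : 0 ≤ α i := by
  obtain ⟨U, hU1, hU2, rfl⟩ := h
  have := hq (U *ᵥ Pi.single i 1)
  rw [qf_conj, Matrix.mulVec_mulVec, hU2, Matrix.one_mulVec,
    Finset.sum_eq_single i (by intro j _ hj; simp [hj]) (by simp)] at this
  simpa using this

/-- Lidskii's inequality. -/
theorem lidskii {d : ℕ} {A B : Matrix (Fin d) (Fin d) ℂ} {lam μ σ : Fin d → ℝ}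
    (hA : Dec A lam) (hB : Dec B μ) (hC : Dec (A + B) σ) (hlam : Monotone lam)
    (hμ : Antitone μ) (hσ : Antitone σ) (I : Finset (Fin d)) :
    ∑ i ∈ I, (lam i + μ i) ≤ pre σ I.card := by
  rcases (Finset.card_le_univ I).lt_or_eq with hI | hI
  · rw [Fintype.card_fin] at hI
    set τ := σ ⟨I.card, hI⟩ with hτ
    obtain ⟨W, hW1, hW2, hW⟩ := hC
    set π : Fin d → ℝ := fun i => max (σ i - τ) 0 with hπ
    set P : Matrix (Fin d) (Fin d) ℂ := W * Matrix.diagonal (fun i => (π i : ℂ)) * Wᴴ with hP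
    have hPD : Dec P π := ⟨W, hW1, hW2, rfl⟩
    set T : Matrix (Fin d) (Fin d) ℂ := W * Matrix.diagonal (fun _ => (τ : ℂ)) * Wᴴ with hT
    have hTD : Dec T (fun _ => τ) := ⟨W, hW1, hW2, rfl⟩
    have hT2 : T = (τ : ℂ) • (1 : Matrix (Fin d) (Fin d) ℂ) := by
      have : (Matrix.diagonal (fun _ => (τ : ℂ)) : Matrix (Fin d) (Fin d) ℂ) = (τ : ℂ) • 1 := by
        rw [Matrix.smul_one_eq_diagonal]
      rw [hT, this, Matrix.mul_smul, Matrix.smul_mul, mul_one, hW1]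
    have hTA : Dec (T - A) (fun i => τ - lam i) := by
      obtain ⟨U, hU1, hU2, hU⟩ := hA
      refine ⟨U, hU1, hU2, ?_⟩
      have : (Matrix.diagonal (fun i => ((τ - lam i : ℝ) : ℂ)) : Matrix (Fin d) (Fin d) ℂ)
          = (τ : ℂ) • 1 - Matrix.diagonal (fun i => (lam i : ℂ)) := by
        rw [Matrix.smul_one_eq_diagonal, Matrix.diagonal_sub]
        simp
      rw [this, mul_sub, sub_mul, ← hU, hT2, Matrix.mul_smul, Matrix.smul_mul, mul_one, hU1]
    set D := T + P - A with hD
    have hDh : D.IsHermitian := (hTD.herm.add hPD.herm).sub hA.herm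
    have hDD := dec_eigsDesc hDh
    have w1 : ∀ i, μ i ≤ eigsDesc D i := by
      apply weyl hB hDD hμ eigsDesc_anti
      intro v
      rw [hD, qf_sub, qf_add]
      have e : qf A v + qf B v = ∑ i, σ i * Complex.normSq ((Wᴴ *ᵥ v) i) := by
        rw [← qf_add, hW, qf_conj]
      have e2 : ∑ i, σ i * Complex.normSq ((Wᴴ *ᵥ v) i) ≤ qf T v + qf P v := by
        rw [hT, hP, qf_conj W (fun _ => τ), qf_conj W π, ← Finset.sum_add_distrib]
        apply Finset.sum_le_sum
        intro i _
        rw [← add_mul]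
        apply mul_le_mul_of_nonneg_right _ (Complex.normSq_nonneg _)
        have := le_max_left (σ i - τ) 0
        simp only [hπ]
        linarith
      linarith
    have w2 : ∀ i, τ - lam i ≤ eigsDesc D i := by
      apply weyl hTA hDD _ eigsDesc_anti
      · intro v
        rw [hD, qf_sub, qf_sub, qf_add]
        have : 0 ≤ qf P v := by
          rw [hP, qf_conj W π]
          exact Finset.sum_nonneg fun i _ =>
            mul_nonneg (le_max_right _ _) (Complex.normSq_nonneg _)
        linarith
      · intro i j hij
        have := hlam hij
        dsimp only
        linarith
    have tr : ∑ i, eigsDesc D i = ∑ i, (τ - lam i) + ∑ i, π i := by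
      rw [← dec_trace hDD, ← dec_trace hTA, ← dec_trace hPD, hD]
      simp only [Matrix.trace_sub, Matrix.trace_add, Complex.sub_re, Complex.add_re]
      ring
    have key : ∑ i ∈ I, (eigsDesc D i - (τ - lam i)) ≤ ∑ i, (eigsDesc D i - (τ - lam i)) :=
      Finset.sum_le_sum_of_subset_of_nonneg (Finset.subset_univ _)
        (fun i _ _ => by linarith [w2 i])
    have k2 : ∑ i ∈ I, (lam i + μ i) ≤ ∑ i ∈ I, ((eigsDesc D i - (τ - lam i)) + τ) :=
      Finset.sum_le_sum fun i _ => by linarith [w1 i]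
    have k4 : ∑ i ∈ I, ((eigsDesc D i - (τ - lam i)) + τ)
        = ∑ i ∈ I, (eigsDesc D i - (τ - lam i)) + I.card * τ := by
      rw [Finset.sum_add_distrib, Finset.sum_const, nsmul_eq_mul]
    have k5 : ∑ i, (eigsDesc D i - (τ - lam i)) = ∑ i, π i := by
      rw [Finset.sum_sub_distrib, tr]; ring
    have k3 : ∑ i, π i + I.card * τ = pre σ I.card := by
      have c1 : ((I.card : ℕ) : ℝ) = ∑ i : Fin d, if (i : ℕ) < I.card then (1 : ℝ) else 0 := by
        rw [Finset.sum_boole]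
        congr 1
        rw [Fin.card_filter_val_lt, min_eq_right hI.le]
      rw [c1, Finset.sum_mul, ← Finset.sum_add_distrib]
      unfold pre
      apply Finset.sum_congr rfl
      intro i _
      simp only [hπ]
      split_ifs with h
      · have : τ ≤ σ i := hσ (Fin.le_def.2 h.le)
        rw [max_eq_left (by linarith)]; ring
      · have : σ i ≤ τ := hσ (Fin.le_def.2 (not_lt.1 h))
        rw [max_eq_right (by linarith)]; ring
    linarith
  · have : I = Finset.univ := (Finset.card_eq_iff_eq_univ I).1 hI
    rw [hI, Fintype.card_fin, pre_top _ _ le_rfl, this, Finset.sum_add_distrib, ← dec_trace hA,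
      ← dec_trace hB, ← dec_trace hC]
    simp

lemma frameOp_apply {d n : ℕ} (F : Fin n → Fin d → ℂ) (x y : Fin d) :
    frameOp F x y = ∑ l, F l x * star (F l y) := by
  simp [frameOp, Matrix.sum_apply, Matrix.vecMulVec_apply]

lemma frameOp_herm {d n : ℕ} (F : Fin n → Fin d → ℂ) : (frameOp F).IsHermitian := by
  ext x y
  rw [Matrix.conjTranspose_apply, frameOp_apply, frameOp_apply, star_sum]
  exact Finset.sum_congr rfl fun l _ => by simp [mul_comm]

lemma qf_frameOp {d n : ℕ} (F : Fin n → Fin d → ℂ) (v : Fin d → ℂ) :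
    qf (frameOp F) v = ∑ l, Complex.normSq (star (F l) ⬝ᵥ v) := by
  unfold qf frameOp
  rw [Matrix.sum_mulVec, dotProduct_sum, Complex.re_sum]
  refine Finset.sum_congr rfl fun l _ => ?_
  rw [Matrix.vecMulVec_mulVec]
  have h : star v ⬝ᵥ F l = star (star (F l) ⬝ᵥ v) := by
    rw [← Matrix.star_dotProduct_star, star_star, dotProduct_comm]
  simp only [dotProduct_smul, h, Complex.normSq_apply]
  simp

lemma qf_frameOp_nonneg {d n : ℕ} (F : Fin n → Fin d → ℂ) (v : Fin d → ℂ) :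
    0 ≤ qf (frameOp F) v := by
  rw [qf_frameOp]
  exact Finset.sum_nonneg fun _ _ => Complex.normSq_nonneg _

lemma trace_frameOp {d n : ℕ} (F : Fin n → Fin d → ℂ) :
    (frameOp F).trace.re = ∑ l, normSqVec (F l) := by
  simp only [Matrix.trace, Matrix.diag_apply, frameOp_apply, Complex.re_sum, normSqVec]
  rw [Finset.sum_comm]
  refine Finset.sum_congr rfl fun l _ => Finset.sum_congr rfl fun x _ => ?_
  simp [Complex.normSq_apply]

lemma pre_comp_perm {d : ℕ} (x : Fin d → ℝ) (π : Equiv.Perm (Fin d)) (m : ℕ) :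
    ∃ I : Finset (Fin d), I.card = min d m ∧ pre (x ∘ π) m = ∑ i ∈ I, x i := by
  refine ⟨(Finset.univ.filter (fun i : Fin d => (i : ℕ) < m)).map π.toEmbedding, ?_, ?_⟩
  · rw [Finset.card_map, Fin.card_filter_val_lt]
  · rw [Finset.sum_map, Finset.sum_filter]; rfl

lemma pre_min {d : ℕ} (x : Fin d → ℝ) (m : ℕ) : pre x (min d m) = pre x m := by
  unfold pre
  refine Finset.sum_congr rfl fun i _ => ?_
  have := i.2
  congr 1
  simp

theorem potential_ge {d : ℕ} {A B : Matrix (Fin d) (Fin d) ℂ} {lam μ : Fin d → ℝ}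
    (hA : Dec A lam) (hB : Dec B μ) (hlam : Monotone lam) (hμ : Antitone μ)
    (hq : ∀ v, 0 ≤ qf (A + B) v) {f : ℝ → ℝ} (hf : ConvexOn ℝ (Set.Ici 0) f) :
    ∑ i, f (lam i + μ i) ≤ potential f (A + B) := by
  have hC := dec_eigsDesc (hA.herm.add hB.herm)
  set x : Fin d → ℝ := fun i => lam i + μ i with hx
  have hk := karamata hf (sortDesc x) (eigsDesc (A + B)) (sortDesc_anti x) (dec_nonneg hC hq) ?_ ?_
  · rw [sortDesc_eq] at hk
    have e := Equiv.sum_comp (Fin.revPerm.trans (Tuple.sort x)) (fun i => f (x i))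
    exact e ▸ hk
  · intro m
    rw [sortDesc_eq]
    obtain ⟨I, hI, h⟩ := pre_comp_perm x (Fin.revPerm.trans (Tuple.sort x)) m
    rw [h, ← pre_min (eigsDesc (A + B)), ← hI]
    exact lidskii hA hB hC hlam hμ eigsDesc_anti I
  · rw [sortDesc_eq]
    have e := Equiv.sum_comp (Fin.revPerm.trans (Tuple.sort x)) x
    refine Eq.trans e ?_
    rw [hx, Finset.sum_add_distrib, ← dec_trace hA, ← dec_trace hB, ← dec_trace hC]
    simp

lemma sum_two_upd {k : ℕ} {α M : Type*} [AddCommGroup M] (G : Fin k → α) (i j : Fin k)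
    (hij : i ≠ j) (u v : α) (φ : α → M) :
    ∑ l, φ (if l = i then u else if l = j then v else G l)
      = ∑ l, φ (G l) + (φ u + φ v - φ (G i) - φ (G j)) := by
  have h : ∀ l, φ (if l = i then u else if l = j then v else G l)
      = φ (G l) + (if l = i then φ u - φ (G i) else 0) + (if l = j then φ v - φ (G j) else 0) := by
    intro l
    by_cases h1 : l = i
    · subst h1; simp [hij]
    · by_cases h2 : l = j
      · subst h2; simp [h1]
      · simp [h1, h2]
  rw [Finset.sum_congr rfl (fun l _ => h l), Finset.sum_add_distrib, Finset.sum_add_distrib]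
  simp
  abel

lemma exists_phase (w : ℂ) : ∃ ω : ℂ, ω * star ω = 1 ∧ (star ω * w).re = 0 := by
  by_cases hw : w = 0
  · exact ⟨1, by simp, by simp [hw]⟩
  · have hn : ((‖w‖ : ℝ) : ℂ) ≠ 0 := by simpa using hw
    have hw2 : w * star w = (‖w‖ : ℂ) ^ 2 := by
      rw [← Complex.mul_conj']; rfl
    refine ⟨Complex.I * w / ‖w‖, ?_, ?_⟩
    · have : Complex.I * w / ‖w‖ * star (Complex.I * w / ‖w‖) = (w * star w) / (‖w‖ : ℂ) ^ 2 := by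
        simp only [star_div₀, star_mul', Complex.star_def, Complex.conj_I, Complex.conj_ofReal]
        field_simp
        simp
      rw [this, hw2]
      field_simp
    · have : star (Complex.I * w / ‖w‖) * w = -Complex.I * ((w * star w) / ‖w‖) := by
        simp only [star_div₀, star_mul', Complex.star_def, Complex.conj_I, Complex.conj_ofReal]
        ring
      rw [this, hw2, pow_two, mul_div_assoc, div_self hn]
      simp

lemma frame_step {d k : ℕ} (G : Fin k → Fin d → ℂ) (i j : Fin k) (hij : i ≠ j) (δ : ℝ)
    (h0 : 0 ≤ δ) (h1 : δ ≤ normSqVec (G i) - normSqVec (G j)) :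
    ∃ G' : Fin k → Fin d → ℂ, frameOp G' = frameOp G ∧
      ∀ l, normSqVec (G' l) = mv (fun l => normSqVec (G l)) i j δ l := by
  rcases eq_or_lt_of_le (h0.trans h1) with h | h
  · have : δ = 0 := by linarith
    exact ⟨G, rfl, fun l => by simp [mv, this]⟩
  set x := normSqVec (G i) with hx
  set y := normSqVec (G j) with hy
  set t := δ / (x - y) with ht
  have ht0 : 0 ≤ t := by positivity
  have ht1 : t ≤ 1 := by rw [ht, div_le_one h]; exact h1
  have htδ : t * (x - y) = δ := by rw [ht]; field_simp
  set cs : ℝ := Real.sqrt (1 - t) with hcs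
  set sn : ℝ := Real.sqrt t with hsn
  have hcs2 : cs * cs = 1 - t := Real.mul_self_sqrt (by linarith)
  have hsn2 : sn * sn = t := Real.mul_self_sqrt ht0
  have hone : (cs : ℂ) * cs + sn * sn = 1 := by
    rw [← Complex.ofReal_mul, ← Complex.ofReal_mul, hcs2, hsn2]; simp
  obtain ⟨ω, hω1, hω2⟩ := exists_phase (∑ l, G i l * star (G j l))
  set u : Fin d → ℂ := fun l => cs * G i l + sn * ω * G j l with hu
  set v : Fin d → ℂ := fun l => - (sn * star ω * G i l) + cs * G j l with hv
  have hω3 : ω.re * ω.re + ω.im * ω.im = 1 := by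
    have := congrArg Complex.re hω1
    simpa using this
  have hcross : ∑ l, (star ω * (G i l * star (G j l))).re = 0 := by
    rw [← Complex.re_sum, ← Finset.mul_sum]; exact hω2
  have hnu : normSqVec u = x - δ := by
    have : normSqVec u = (cs * cs) * x + (sn * sn) * y
        + 2 * (cs * sn) * ∑ l, (star ω * (G i l * star (G j l))).re := by
      rw [hx, hy]
      unfold normSqVec
      rw [Finset.mul_sum, Finset.mul_sum, Finset.mul_sum, ← Finset.sum_add_distrib,
        ← Finset.sum_add_distrib]
      refine Finset.sum_congr rfl fun l _ => ?_
      simp only [hu, Complex.normSq_apply]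
      simp
      linear_combination (sn * sn * ((G j l).re * (G j l).re + (G j l).im * (G j l).im)) * hω3
    rw [this, hcross, hcs2, hsn2, ← htδ]; ring
  have hnv : normSqVec v = y + δ := by
    have : normSqVec v = (sn * sn) * x + (cs * cs) * y
        - 2 * (cs * sn) * ∑ l, (star ω * (G i l * star (G j l))).re := by
      rw [hx, hy]
      unfold normSqVec
      rw [Finset.mul_sum, Finset.mul_sum, Finset.mul_sum, ← Finset.sum_add_distrib,
        ← Finset.sum_sub_distrib]
      refine Finset.sum_congr rfl fun l _ => ?_
      simp only [hv, Complex.normSq_apply]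
      simp
      linear_combination (sn * sn * ((G i l).re * (G i l).re + (G i l).im * (G i l).im)) * hω3
    rw [this, hcross, hcs2, hsn2, ← htδ]; ring
  refine ⟨fun l => if l = i then u else if l = j then v else G l, ?_, ?_⟩
  · ext p q
    rw [frameOp_apply, frameOp_apply]
    rw [sum_two_upd G i j hij u v (fun g => g p * star (g q))]
    have : u p * star (u q) + v p * star (v q) - G i p * star (G i q) - G j p * star (G j q) = 0 := by
      simp only [hu, hv, star_add, star_neg, star_mul', Complex.star_def,
        Complex.conj_ofReal, Complex.conj_conj]
      simp only [Complex.star_def] at hω1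
      linear_combination (G i p * (starRingEnd ℂ) (G i q) + G j p * (starRingEnd ℂ) (G j q)) * hone
        + ((sn : ℂ) * sn * (G i p * (starRingEnd ℂ) (G i q) + G j p * (starRingEnd ℂ) (G j q))) * hω1
    rw [this, add_zero]
  · intro l
    by_cases e1 : l = i
    · subst e1
      simp [mv, hij, hnu, hx]
    · by_cases e2 : l = j
      · subst e2
        simp [mv, e1, hnv, hy]
      · simp [mv, e1, e2]

lemma sum_pad {d k : ℕ} (hdk : d ≤ k) {M : Type*} [AddCommMonoid M] (φ : Fin d → M) :
    ∑ l : Fin k, (if h : (l : ℕ) < d then φ ⟨l, h⟩ else 0) = ∑ i, φ i := by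
  symm
  apply Finset.sum_of_injOn (Fin.castLE hdk)
  · exact (Fin.castLE_injective hdk).injOn
  · simp
  · intro l _ hl
    rw [dif_neg]
    intro h
    exact hl ⟨⟨l, h⟩, by simp, by ext; simp⟩
  · intro i _
    simp

lemma pre_pad {d k : ℕ} (hdk : d ≤ k) (x : Fin d → ℝ) (m : ℕ) : pre (pad x k) m = pre x m := by
  unfold pre pad
  rw [← sum_pad hdk]
  refine Finset.sum_congr rfl fun l _ => ?_
  by_cases h : (l : ℕ) < d <;> simp [h]

lemma sum_pad' {d k : ℕ} (hdk : d ≤ k) (x : Fin d → ℝ) : ∑ l, pad x k l = ∑ l, x l := by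
  unfold pad
  exact sum_pad hdk x

theorem exists_frame {d k : ℕ} (hdk : d ≤ k) {A : Matrix (Fin d) (Fin d) ℂ} {lam : Fin d → ℝ}
    (hA : Dec A lam) (a : Fin k → ℝ) (ha : Antitone a) (ν : Fin d → ℝ) (hν : ∀ i, 0 ≤ ν i)
    (hpre : ∀ m, pre a m ≤ pre ν m) (hsum : ∑ l, a l = ∑ l, ν l) :
    ∃ G : Fin k → Fin d → ℂ, (∀ l, normSqVec (G l) = a l) ∧
      Dec (A + frameOp G) (fun i => lam i + ν i) := by
  obtain ⟨U, hU1, hU2, hU⟩ := hA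
  set S : Matrix (Fin d) (Fin d) ℂ := U * Matrix.diagonal (fun i => (ν i : ℂ)) * Uᴴ with hS
  have main := hlp (fun x : Fin k → ℝ => ∃ G : Fin k → Fin d → ℂ, (∀ l, normSqVec (G l) = x l) ∧
      frameOp G = S) ?_ a ha _ (pad ν k) le_rfl ?_
      (fun m => by rw [pre_pad hdk]; exact hpre m) (by rw [sum_pad' hdk]; exact hsum)
  · obtain ⟨G, hG, hGS⟩ := main
    refine ⟨G, hG, U, hU1, hU2, ?_⟩
    rw [hGS, hU, hS, ← Matrix.add_mul, ← Matrix.mul_add, Matrix.diagonal_add]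
    simp
  · rintro x i j δ hij h0 h1 ⟨G, hG, hGS⟩
    obtain ⟨G', h2, h3⟩ := frame_step G i j hij δ h0 (by rw [hG, hG]; exact h1)
    refine ⟨G', fun l => ?_, h2.trans hGS⟩
    rw [h3]
    simp only [mv, hG]
  · refine ⟨fun l p => if h : (l : ℕ) < d then (Real.sqrt (ν ⟨l, h⟩) : ℂ) * U p ⟨l, h⟩ else 0,
      ?_, ?_⟩
    · intro l
      unfold pad normSqVec
      by_cases h : (l : ℕ) < d
      · simp only [h, dif_pos]
        have hcol : ∑ p, Complex.normSq (U p ⟨l, h⟩) = 1 := by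
          have := congrArg Complex.re (congrFun (congrFun hU2 ⟨l, h⟩) ⟨l, h⟩)
          rw [Matrix.mul_apply, Complex.re_sum, Matrix.one_apply_eq, Complex.one_re] at this
          rw [← this]
          refine Finset.sum_congr rfl fun p _ => ?_
          simp [Complex.normSq_apply]
        simp only [Complex.normSq_mul, Complex.normSq_ofReal, Real.mul_self_sqrt (hν _)]
        rw [← Finset.mul_sum, hcol, mul_one]
      · simp [h]
    · ext p q
      rw [frameOp_apply, hS, Matrix.mul_apply]
      rw [← sum_pad hdk]
      refine Finset.sum_congr rfl fun l _ => ?_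
      by_cases h : (l : ℕ) < d
      · simp only [h, dif_pos, Matrix.mul_diagonal, Matrix.conjTranspose_apply, star_mul',
          Complex.star_def, Complex.conj_ofReal]
        have : ((Real.sqrt (ν ⟨l, h⟩) : ℝ) : ℂ) * (Real.sqrt (ν ⟨l, h⟩) : ℝ) = (ν ⟨l, h⟩ : ℝ) := by
          rw [← Complex.ofReal_mul, Real.mul_self_sqrt (hν _)]
        rw [← this]; ring
      · simp [h]

theorem schur_pre {d k : ℕ} (hdk : d ≤ k) (G : Fin k → Fin d → ℂ) (m : ℕ) :
    pre (fun l => normSqVec (G l)) m ≤ pre (eigsDesc (frameOp G)) m := by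
  set H : Fin k → Fin d → ℂ := fun l => if (l : ℕ) < m then G l else 0 with hH
  have hHD := dec_eigsDesc (frameOp_herm H)
  have hGD := dec_eigsDesc (frameOp_herm G)
  have w : ∀ i, eigsDesc (frameOp H) i ≤ eigsDesc (frameOp G) i := by
    apply weyl hHD hGD eigsDesc_anti eigsDesc_anti
    intro v
    rw [qf_frameOp, qf_frameOp]
    apply Finset.sum_le_sum
    intro l _
    simp only [hH]
    split_ifs
    · exact le_rfl
    · simp [Complex.normSq_nonneg]
  have z : ∀ i : Fin d, m ≤ (i : ℕ) → eigsDesc (frameOp H) i ≤ 0 := by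
    intro i hi
    obtain ⟨U, hU1, hU2, hU⟩ := hHD
    set M : Matrix (Fin d) (Fin d) ℂ :=
      fun j l => if j = i then 0 else if i < j then Uᴴ j l else star (H (Fin.castLE hdk j) l)
      with hM
    have hdet : M.det = 0 := by
      apply Matrix.det_eq_zero_of_row_eq_zero i
      intro l
      simp [hM]
    obtain ⟨v, hv0, hv⟩ := Matrix.exists_mulVec_eq_zero_iff.2 hdet
    have hUv : ∀ j, i < j → (Uᴴ *ᵥ v) j = 0 := by
      intro j hj
      have := congrFun hv j
      rw [← Pi.zero_apply (M := fun _ => ℂ) j, ← this]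
      simp [Matrix.mulVec, dotProduct, hM, hj, hj.ne']
    have hVv : ∀ j : Fin k, star (H j) ⬝ᵥ v = 0 := by
      intro j
      by_cases hj : (j : ℕ) < m
      · have hji : (⟨j, by omega⟩ : Fin d) < i := Fin.lt_def.2 (by simp; omega)
        have := congrFun hv ⟨j, by omega⟩
        rw [← Pi.zero_apply (M := fun _ => ℂ) (⟨j, by omega⟩ : Fin d), ← this]
        simp [Matrix.mulVec, dotProduct, hM, hji.ne, not_lt.2 hji.le]
      · simp [hH, hj]
    have hpos : 0 < ∑ i, Complex.normSq (v i) := by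
      obtain ⟨l, hl⟩ := Function.ne_iff.1 hv0
      exact Finset.sum_pos' (fun _ _ => Complex.normSq_nonneg _)
        ⟨l, Finset.mem_univ _, Complex.normSq_pos.2 hl⟩
    have h1 : eigsDesc (frameOp H) i * ∑ i, Complex.normSq (v i) ≤ qf (frameOp H) v := by
      have e : qf (frameOp H) v = _ := (congrArg (fun A => qf A v) hU).trans (qf_conj U _ v)
      rw [e, ← norm_unit U hU1 v, Finset.mul_sum]
      apply Finset.sum_le_sum
      intro j _
      by_cases hj : i < j
      · simp [hUv j hj]
      · exact mul_le_mul_of_nonneg_right (eigsDesc_anti (not_lt.1 hj)) (Complex.normSq_nonneg _)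
    have h2 : qf (frameOp H) v = 0 := by
      rw [qf_frameOp]
      simp [hVv]
    rw [h2] at h1
    by_contra hc
    push Not at hc
    have := mul_pos hc hpos
    linarith
  have t1 : pre (fun l => normSqVec (G l)) m = ∑ i, eigsDesc (frameOp H) i := by
    rw [← dec_trace hHD, trace_frameOp]
    unfold pre
    refine Finset.sum_congr rfl fun l _ => ?_
    simp only [hH]
    split_ifs
    · rfl
    · simp [normSqVec]
  rw [t1]
  unfold pre
  apply Finset.sum_le_sum
  intro i _
  split_ifs with h
  · exact w i
  · exact z i (not_lt.1 h)

theorem schur_sum {d k : ℕ} (G : Fin k → Fin d → ℂ) :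
    ∑ l, normSqVec (G l) = ∑ i, eigsDesc (frameOp G) i := by
  rw [← dec_trace (dec_eigsDesc (frameOp_herm G)), trace_frameOp]

noncomputable def ext0 {n : ℕ} (g : Fin n → ℝ) (l : ℕ) : ℝ := if h : l < n then g ⟨l, h⟩ else 0

lemma pre_succ {n : ℕ} (g : Fin n → ℝ) (m : ℕ) : pre g (m + 1) = pre g m + ext0 g m := by
  have h : ext0 g m = ∑ i : Fin n, if (i : ℕ) = m then g i else 0 := by
    unfold ext0
    split_ifs with h
    · rw [Finset.sum_eq_single ⟨m, h⟩]
      · simp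
      · intro b _ hb
        rw [if_neg]
        intro hbm
        exact hb (Fin.ext hbm)
      · simp
    · symm
      apply Finset.sum_eq_zero
      intro i _
      rw [if_neg]
      have := i.2
      omega
  rw [h]
  unfold pre
  rw [← Finset.sum_add_distrib]
  refine Finset.sum_congr rfl fun i _ => ?_
  by_cases h1 : (i : ℕ) < m
  · rw [if_pos (by omega), if_pos h1, if_neg (by omega), add_zero]
  · by_cases h2 : (i : ℕ) = m
    · rw [if_pos (by omega), if_neg h1, if_pos h2, zero_add]
    · rw [if_neg (by omega), if_neg h1, if_neg h2, zero_add]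

lemma pre_zero {n : ℕ} (g : Fin n → ℝ) : pre g 0 = 0 := by simp [pre]

lemma pre_range {n : ℕ} (g : Fin n → ℝ) (m : ℕ) : pre g m = ∑ l ∈ Finset.range m, ext0 g l := by
  induction m with
  | zero => simp [pre_zero]
  | succ m ih => rw [pre_succ, Finset.sum_range_succ, ih]

lemma pre_shift {n : ℕ} (g : Fin n → ℝ) (t j : ℕ) :
    pre (fun i : Fin (n - t) => g ⟨t + (i : ℕ), by have := i.isLt; omega⟩) j
      = pre g (t + j) - pre g t := by
  rw [pre_range, pre_range, pre_range, Finset.sum_range_add]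
  rw [add_sub_cancel_left]
  refine Finset.sum_congr rfl fun l _ => ?_
  unfold ext0
  by_cases h : l < n - t
  · rw [dif_pos h, dif_pos (by omega)]
  · rw [dif_neg h, dif_neg (by omega)]

lemma pre_diff {n : ℕ} (g : Fin n → ℝ) (t e : ℕ) (h : t ≤ e) :
    pre g e - pre g t = ∑ i : Fin n, if t ≤ (i : ℕ) ∧ (i : ℕ) < e then g i else 0 := by
  unfold pre
  rw [← Finset.sum_sub_distrib]
  refine Finset.sum_congr rfl fun i _ => ?_
  by_cases h1 : (i : ℕ) < t
  · rw [if_pos (by omega), if_pos h1, if_neg (by omega), sub_self]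
  · by_cases h2 : (i : ℕ) < e
    · rw [if_pos h2, if_neg h1, if_pos (by omega), sub_zero]
    · rw [if_neg h2, if_neg h1, if_neg (by omega), sub_zero]

lemma pre_tail {n : ℕ} (g : Fin n → ℝ) (t : ℕ) :
    ∑ i, g i - pre g t = ∑ i : Fin n, if t ≤ (i : ℕ) then g i else 0 := by
  unfold pre
  rw [← Finset.sum_sub_distrib]
  refine Finset.sum_congr rfl fun i _ => ?_
  by_cases h1 : (i : ℕ) < t
  · rw [if_pos h1, if_neg (by omega), sub_self]
  · rw [if_neg h1, if_pos (by omega), sub_zero]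

lemma sortDesc_of_anti {m : ℕ} {x : Fin m → ℝ} (hx : Antitone x) : sortDesc x = x := by
  have h := Tuple.unique_antitone (f := x) (σ := Fin.revPerm.trans (Tuple.sort x))
    (τ := Equiv.refl _) (sortDesc_anti x) hx
  exact h

lemma sum_Iic {m : ℕ} (x : Fin m → ℝ) (j : Fin m) :
    ∑ i ∈ Finset.Iic j, x i = pre x (j + 1) := by
  unfold pre
  rw [← Finset.sum_filter]
  congr 1
  ext i
  simp only [Finset.mem_Iic, Finset.mem_filter, Finset.mem_univ, true_and, Fin.le_def]
  omega

lemma maj_iff {m : ℕ} {x y : Fin m → ℝ} (hx : Antitone x) (hy : Antitone y) :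
    MajorizedBy x y ↔ (∀ j, pre x j ≤ pre y j) ∧ ∑ i, x i = ∑ i, y i := by
  unfold MajorizedBy
  rw [sortDesc_of_anti hx, sortDesc_of_anti hy]
  simp only [sum_Iic]
  constructor
  · rintro ⟨h1, h2⟩
    refine ⟨fun j => ?_, h2⟩
    by_cases hj : m ≤ j
    · rw [pre_top _ _ hj, pre_top _ _ hj, h2]
    · rcases j with _ | j
      · rw [pre_zero, pre_zero]
      · exact h1 ⟨j, by omega⟩
  · rintro ⟨h1, h2⟩
    exact ⟨fun j => h1 _, h2⟩

lemma pad_anti {m : ℕ} {x : Fin m → ℝ} (hx : Antitone x) (h0 : ∀ i, 0 ≤ x i) (N : ℕ) :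
    Antitone (pad x N) := by
  intro i j hij
  have hij' := Fin.le_def.1 hij
  unfold pad
  by_cases hj : (j : ℕ) < m
  · rw [dif_pos hj, dif_pos (by omega)]
    exact hx (Fin.le_def.2 hij')
  · rw [dif_neg hj]
    split_ifs
    · exact h0 _
    · exact le_rfl

lemma majPad_iff {n m : ℕ} {x : Fin n → ℝ} {y : Fin m → ℝ} (hx : Antitone x) (hy : Antitone y)
    (hx0 : ∀ i, 0 ≤ x i) (hy0 : ∀ i, 0 ≤ y i) :
    MajorizedByPad x y ↔ (∀ j, pre x j ≤ pre y j) ∧ ∑ i, x i = ∑ i, y i := by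
  unfold MajorizedByPad
  rw [maj_iff (pad_anti hx hx0 _) (pad_anti hy hy0 _), sum_pad' (le_max_left _ _),
    sum_pad' (le_max_right _ _)]
  simp only [pre_pad (le_max_left n m), pre_pad (le_max_right n m)]

noncomputable def gfun {d : ℕ} (lam : Fin d → ℝ) (r : ℕ) (c : ℝ) : Fin d → ℝ :=
  fun l => if (l : ℕ) < r then c - lam l else 0

lemma feas_maj_iff {d k : ℕ} (hdk : d ≤ k) (lam : Fin d → ℝ) (hlam : Monotone lam)
    (a : Fin k → ℝ) (ha0 : ∀ i, 0 < a i) (ha : Antitone a) (t r : ℕ) (c : ℝ) (htd : t ≤ d)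
    (hc : ∀ i : Fin d, t ≤ (i : ℕ) → (i : ℕ) < r → lam i ≤ c) :
    MajorizedByPad (fun i : Fin (k - t) => a ⟨t + (i : ℕ), by have := i.isLt; omega⟩)
      (fun i : Fin (d - t) =>
        if t + (i : ℕ) < r then c - lam ⟨t + (i : ℕ), by have := i.isLt; omega⟩ else 0) ↔
    (∀ j, pre a (t + j) - pre a t ≤ pre (gfun lam r c) (t + j) - pre (gfun lam r c) t) ∧
      ∑ i, a i - pre a t = ∑ i, gfun lam r c i - pre (gfun lam r c) t := by
  have hx : Antitone (fun i : Fin (k - t) => a ⟨t + (i : ℕ), by have := i.isLt; omega⟩) := by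
    intro i j hij
    exact ha (Fin.le_def.2 (by have := Fin.le_def.1 hij; simp; omega))
  have hy : Antitone (fun i : Fin (d - t) =>
        if t + (i : ℕ) < r then c - lam ⟨t + (i : ℕ), by have := i.isLt; omega⟩ else 0) := by
    intro i j hij
    have hij' := Fin.le_def.1 hij
    dsimp only
    by_cases hj : t + (j : ℕ) < r
    · rw [if_pos hj, if_pos (by omega)]
      have : lam ⟨t + (i : ℕ), by have := i.isLt; omega⟩ ≤
        lam ⟨t + (j : ℕ), by have := j.isLt; omega⟩ := hlam (Fin.le_def.2 (by simp; omega))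
      linarith
    · rw [if_neg hj]
      split_ifs with h
      · have := hc ⟨t + (i : ℕ), by have := i.isLt; omega⟩ (by simp) h
        linarith
      · exact le_rfl
  have hy0 : ∀ i : Fin (d - t),
        0 ≤ if t + (i : ℕ) < r then c - lam ⟨t + (i : ℕ), by have := i.isLt; omega⟩ else 0 := by
    intro i
    split_ifs with h
    · have := hc ⟨t + (i : ℕ), by have := i.isLt; omega⟩ (by simp) h
      linarith
    · exact le_rfl
  rw [majPad_iff hx hy (fun i => (ha0 _).le) hy0]
  have e1 := fun j => pre_shift a t j
  have e2 : ∀ j, pre (fun i : Fin (d - t) =>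
        if t + (i : ℕ) < r then c - lam ⟨t + (i : ℕ), by have := i.isLt; omega⟩ else 0) j = _ :=
    fun j => pre_shift (gfun lam r c) t j
  have e3 := pre_top (fun i : Fin (k - t) => a ⟨t + (i : ℕ), by have := i.isLt; omega⟩) _ le_rfl
  have e4 := pre_top (fun i : Fin (d - t) =>
        if t + (i : ℕ) < r then c - lam ⟨t + (i : ℕ), by have := i.isLt; omega⟩ else 0) _ le_rfl
  rw [← e3, ← e4]
  simp only [e1, e2]
  rw [pre_top a (t + (k - t)) (by omega), pre_top (gfun lam r c) (t + (d - t)) (by omega)]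

theorem core {d k : ℕ} (hdk : d ≤ k) (a : Fin k → ℝ)
    (ha_pos : ∀ i, 0 < a i) (ha_mono : Antitone a)
    (lam μ : Fin d → ℝ) (hlam : Monotone lam) (hμ0 : ∀ i, 0 ≤ μ i)
    (hpre : ∀ m, pre a m ≤ pre μ m) (hsum : ∑ i, a i = ∑ i, μ i)
    (hadj : ∀ i j : Fin d, (j : ℕ) = i + 1 → lam j + μ j < lam i + μ i →
      pre a (i + 1) = pre μ (i + 1))
    (sF : ℕ) (hsF : sF ≤ d)
    (p : ℕ) (c : Fin (p + 1) → ℝ) (hcanti : StrictAnti c) (hcpos : ∀ j, 0 < c j)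
    (s : Fin (p + 1 + 1) → ℕ) (hs0 : s 0 = 0) (hsm : StrictMono s)
    (hsl : s (Fin.last (p + 1)) = sF)
    (hblock : ∀ j : Fin (p + 1), ∀ i : Fin d,
      s j.castSucc ≤ (i : ℕ) → (i : ℕ) < s j.succ → lam i + μ i = c j)
    (htail : ∀ i : Fin d, sF ≤ (i : ℕ) → μ i = 0) :
    IsLeast {t : ℕ | t < d ∧ FeasibleIdx lam a t} (s (Fin.last p).castSucc) := by
  have hsd : ∀ j, s j ≤ d := fun j => (hsm.monotone (Fin.le_last j)).trans (hsl.trans_le hsF)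
  have hss : ∀ j : Fin (p + 1), s j.castSucc < s j.succ := fun j => hsm j.castSucc_lt_succ
  have hbd : ∀ j : Fin (p + 1), pre a (s j.castSucc) = pre μ (s j.castSucc) := by
    intro j
    refine Fin.cases ?_ (fun j => ?_) j
    · rw [Fin.castSucc_zero, hs0, pre_zero, pre_zero]
    · have h1 := hss j.castSucc
      have h2 := hss j.succ
      have h3 := hsd j.succ.succ
      rw [Fin.succ_castSucc] at h1
      have b1 := hblock j.castSucc ⟨s j.succ.castSucc - 1, by omega⟩
        (show s j.castSucc.castSucc ≤ s j.succ.castSucc - 1 by omega)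
        (by rw [Fin.succ_castSucc]; show s j.succ.castSucc - 1 < s j.succ.castSucc; omega)
      have b2 := hblock j.succ ⟨s j.succ.castSucc, by omega⟩ (by simp) (by simpa using h2)
      have h4 := hadj ⟨s j.succ.castSucc - 1, by omega⟩ ⟨s j.succ.castSucc, by omega⟩
        (show s j.succ.castSucc = s j.succ.castSucc - 1 + 1 by omega) (by rw [b1, b2]; exact hcanti j.castSucc_lt_succ)
      have h5 : s j.succ.castSucc - 1 + 1 = s j.succ.castSucc := by omega
      simpa only [h5] using h4
  set q := s (Fin.last p).castSucc with hq
  have hqr : q < sF := by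
    have := hss (Fin.last p)
    rw [Fin.succ_last, hsl] at this
    exact this
  have hlast : ∀ i : Fin d, q ≤ (i : ℕ) → (i : ℕ) < sF → lam i + μ i = c (Fin.last p) := by
    intro i h1 h2
    exact hblock (Fin.last p) i h1 (by rw [Fin.succ_last, hsl]; exact h2)
  have hfind : ∀ l, l < sF → ∃ j : Fin (p + 1), s j.castSucc ≤ l ∧ l < s j.succ := by
    intro l hl
    by_contra h
    push Not at h
    have : ∀ j : Fin (p + 1 + 1), s j ≤ l := by
      intro j
      induction j using Fin.induction with
      | zero => rw [hs0]; exact Nat.zero_le _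
      | succ j ih => exact h j ih
    have := this (Fin.last (p + 1))
    omega
  constructor
  · refine ⟨by omega, sF, c (Fin.last p), hqr, hsF, hcpos _, ?_, ?_, ?_, ?_⟩
    · intro i h1 h2
      have := hlast i h1 h2
      linarith [hμ0 i]
    · intro hrd
      by_contra hc
      push Not at hc
      have b1 := hlast ⟨sF - 1, by omega⟩ (by simp; omega) (by simp; omega)
      have h4 := hadj ⟨sF - 1, by omega⟩ ⟨sF, hrd⟩ (by simp; omega)
        (by rw [b1, htail _ le_rfl, add_zero]; exact hc)
      have h5 : sF - 1 + 1 = sF := by omega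
      simp only [h5] at h4
      have h6 := pre_tail a sF
      have h7 := pre_tail μ sF
      have h8 : (∑ i : Fin d, if sF ≤ (i : ℕ) then μ i else 0) = 0 :=
        Finset.sum_eq_zero fun i _ => by
          split_ifs with h
          · exact htail i h
          · rfl
      have h9 : 0 < ∑ i : Fin k, if sF ≤ (i : ℕ) then a i else 0 := by
        refine Finset.sum_pos' (fun i _ => ?_) ⟨⟨sF, by omega⟩, Finset.mem_univ _, ?_⟩
        · split_ifs
          · exact (ha_pos i).le
          · exact le_rfl
        · simpa using ha_pos _
      linarith
    · rw [← pre_tail a q, hsum, hbd, ← hq, pre_tail μ q, ← Finset.sum_add_distrib]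
      have e : ∀ i : Fin d, ((if q ≤ (i : ℕ) ∧ (i : ℕ) < sF then lam i else 0) +
          if q ≤ (i : ℕ) then μ i else 0) =
          if q ≤ (i : ℕ) ∧ (i : ℕ) < sF then c (Fin.last p) else 0 := by
        intro i
        by_cases h1 : q ≤ (i : ℕ)
        · by_cases h2 : (i : ℕ) < sF
          · simp only [h1, h2, and_self, if_true]
            exact hlast i h1 h2
          · simp only [h1, h2, and_false, if_true, if_false, zero_add]
            exact htail i (not_lt.1 h2)
        · simp [h1]
      rw [Finset.sum_congr rfl fun i _ => e i, ← pre_diff (fun _ => c (Fin.last p)) q sF hqr.le]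
      have e2 : ∀ m, m ≤ d → pre (fun _ : Fin d => c (Fin.last p)) m = m * c (Fin.last p) := by
        intro m hm
        unfold pre
        rw [← Finset.sum_filter, Finset.sum_const, Fin.card_filter_val_lt, min_eq_right hm,
          nsmul_eq_mul]
      rw [e2 _ hsF, e2 _ (by omega)]
      ring
    · rw [feas_maj_iff hdk lam hlam a ha_pos ha_mono q sF _ (by omega)
        (fun i h1 h2 => by have := hlast i h1 h2; linarith [hμ0 i])]
      have eg : ∀ i : Fin d, q ≤ (i : ℕ) → gfun lam sF (c (Fin.last p)) i = μ i := by
        intro i h1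
        unfold gfun
        split_ifs with h
        · linarith [hlast i h1 h]
        · exact (htail i (not_lt.1 h)).symm
      have hb := hbd (Fin.last p)
      rw [← hq] at hb
      constructor
      · intro j
        have : pre (gfun lam sF (c (Fin.last p))) (q + j) - pre (gfun lam sF (c (Fin.last p))) q
            = pre μ (q + j) - pre μ q := by
          rw [pre_diff _ _ _ (by omega), pre_diff _ _ _ (by omega)]
          refine Finset.sum_congr rfl fun i _ => ?_
          split_ifs with h
          · exact eg i h.1
          · rfl
        rw [this, hb]
        linarith [hpre (q + j)]
      · have : ∑ i, gfun lam sF (c (Fin.last p)) i - pre (gfun lam sF (c (Fin.last p))) q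
            = ∑ i, μ i - pre μ q := by
          rw [pre_tail, pre_tail]
          refine Finset.sum_congr rfl fun i _ => ?_
          split_ifs with h
          · exact eg i h
          · rfl
        rw [this, hb, hsum]
  · rintro t ⟨htd, r, c', htr, hrd, hc0, hc1, hc2, -, hmaj⟩
    by_contra hlt
    push Not at hlt
    rw [feas_maj_iff hdk lam hlam a ha_pos ha_mono t r c' htd.le hc1] at hmaj
    obtain ⟨hm1, hm2⟩ := hmaj
    set g := gfun lam r c' with hg
    have hg0 : ∀ l : Fin d, t ≤ (l : ℕ) → 0 ≤ g l := by
      intro l hl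
      simp only [hg, gfun]
      split_ifs with h
      · linarith [hc1 l hl h]
      · exact le_rfl
    have hg1 : ∀ l : Fin d, c' - lam l ≤ g l := by
      intro l
      simp only [hg, gfun]
      split_ifs with h
      · exact le_rfl
      · have h1 : r < d := lt_of_le_of_lt (not_lt.1 h) l.2
        have := hc2 h1
        have h3 : lam ⟨r, h1⟩ ≤ lam l := hlam (Fin.le_def.2 (not_lt.1 h))
        linarith
    obtain ⟨j, hj1, hj2⟩ := hfind t (by omega)
    have hjl : j ≠ Fin.last p := by
      rintro rfl
      omega
    obtain ⟨J, rfl⟩ := Fin.exists_castSucc_eq.2 hjl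
    rw [Fin.succ_castSucc] at hj2
    set e := s J.succ.castSucc with he
    have hed : e < d := lt_of_lt_of_le (hss J.succ) (hsd _)
    have hbe : pre a e = pre μ e := hbd J.succ
    have hbe2 : lam ⟨e, hed⟩ + μ ⟨e, hed⟩ = c J.succ := hblock J.succ _ le_rfl (hss J.succ)
    have hcJ : c J.succ < c J.castSucc := hcanti J.castSucc_lt_succ
    have hme := hm1 (e - t)
    rw [show t + (e - t) = e by omega] at hme
    have hcc : c J.castSucc ≤ c' := by
      by_contra hcon
      push Not at hcon
      have : pre g e - pre g t < pre μ e - pre μ t := by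
        rw [pre_diff _ _ _ hj2.le, pre_diff _ _ _ hj2.le]
        have hst : ∀ l : Fin d, t ≤ (l : ℕ) → (l : ℕ) < e → g l < μ l := by
          intro l h1 h2
          have b := hblock J.castSucc l (hj1.trans h1) (by rw [Fin.succ_castSucc]; exact h2)
          have h3 : lam l ≤ lam ⟨e, hed⟩ := hlam (Fin.le_def.2 h2.le)
          have h4 := hμ0 ⟨e, hed⟩
          simp only [hg, gfun]
          split_ifs <;> linarith
        apply Finset.sum_lt_sum
        · intro l _
          split_ifs with h
          · exact (hst l h.1 h.2).le
          · exact le_rfl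
        · refine ⟨⟨t, htd⟩, Finset.mem_univ _, ?_⟩
          rw [if_pos ⟨le_rfl, hj2⟩, if_pos ⟨le_rfl, hj2⟩]
          exact hst _ le_rfl hj2
      linarith [hpre t]
    have hfin : ∑ i, μ i - pre μ e < ∑ i, g i - pre g e := by
      rw [pre_tail, pre_tail]
      apply Finset.sum_lt_sum
      · intro l _
        split_ifs with h
        · by_cases hl : (l : ℕ) < sF
          · obtain ⟨j', hj1', hj2'⟩ := hfind l hl
            have b := hblock j' l hj1' hj2'
            have h1 : J.succ.castSucc < j'.succ := hsm.lt_iff_lt.1 (lt_of_le_of_lt h hj2')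
            have h2 : J.succ ≤ j' := Fin.castSucc_lt_succ_iff.1 h1
            have h3 := hcanti.antitone h2
            linarith [hg1 l]
          · rw [htail l (not_lt.1 hl)]
            exact hg0 l (hj2.le.trans h)
        · exact le_rfl
      · refine ⟨⟨e, hed⟩, Finset.mem_univ _, ?_⟩
        rw [if_pos le_rfl, if_pos le_rfl]
        linarith [hg1 ⟨e, hed⟩]
    linarith

theorem stmt_12 {d n₀ k : ℕ} (hdk : d ≤ k)
    (F₀ : Fin n₀ → Fin d → ℂ) (a : Fin k → ℝ)
    (ha_pos : ∀ i, 0 < a i) (ha_mono : Antitone a)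
    (f : ℝ → ℝ) (hf : StrictConvexOn ℝ (Set.Ici 0) f) (hf0 : ∀ x ∈ Set.Ici (0 : ℝ), 0 ≤ f x)
    (G : Fin k → Fin d → ℂ) (hG : ∀ i, normSqVec (G i) = a i)
    (hmin : ∀ G' : Fin k → Fin d → ℂ, (∀ i, normSqVec (G' i) = a i) →
      potential f (frameOp F₀ + frameOp G) ≤ potential f (frameOp F₀ + frameOp G'))
    (lam μ : Fin d → ℝ) (hlam : lam = eigsAsc (frameOp F₀)) (hμ : μ = eigsDesc (frameOp G))
    (sF : ℕ) (hsF : sF = (frameOp G).rank)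
    (p : ℕ) (hp : 0 < p) (c : Fin p → ℝ) (hcanti : StrictAnti c) (hcpos : ∀ j, 0 < c j)
    (s : Fin (p + 1) → ℕ) (hs0 : s 0 = 0) (hsm : StrictMono s) (hsl : s (Fin.last p) = sF)
    (hblock : ∀ j : Fin p, ∀ i : Fin d,
      s j.castSucc ≤ (i : ℕ) → (i : ℕ) < s j.succ → lam i + μ i = c j)
    (htail : ∀ i : Fin d, sF ≤ (i : ℕ) → μ i = 0) :
    IsLeast {t : ℕ | t < d ∧ FeasibleIdx lam a t} (s ⟨p - 1, by omega⟩) := by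
  obtain ⟨p, rfl⟩ : ∃ p', p = p' + 1 := ⟨p - 1, by omega⟩
  have hDA : Dec (frameOp F₀) lam := hlam ▸ dec_eigsAsc (frameOp_herm F₀)
  have hDB : Dec (frameOp G) μ := hμ ▸ dec_eigsDesc (frameOp_herm G)
  have hlm : Monotone lam := hlam ▸ eigsAsc_mono
  have hμa : Antitone μ := hμ ▸ eigsDesc_anti
  have hl0 : ∀ i, 0 ≤ lam i := dec_nonneg hDA (qf_frameOp_nonneg F₀)
  have hμ0 : ∀ i, 0 ≤ μ i := dec_nonneg hDB (qf_frameOp_nonneg G)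
  have haG : a = fun l => normSqVec (G l) := funext fun l => (hG l).symm
  have hpre : ∀ m, pre a m ≤ pre μ m := by
    intro m
    rw [haG, hμ]
    exact schur_pre hdk G m
  have hsum : ∑ i, a i = ∑ i, μ i := by
    rw [haG, hμ]
    exact schur_sum G
  have hopt : ∀ ν : Fin d → ℝ, (∀ i, 0 ≤ ν i) → (∀ m, pre a m ≤ pre ν m) →
      ∑ i, a i = ∑ i, ν i → ∑ i, f (lam i + μ i) ≤ ∑ i, f (lam i + ν i) := by
    intro ν h1 h2 h3
    obtain ⟨G', hG', hD⟩ := exists_frame hdk hDA a ha_mono ν h1 h2 h3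
    have h4 := hmin G' hG'
    rw [dec_potential hD f] at h4
    refine (potential_ge hDA hDB hlm hμa ?_ hf.convexOn).trans h4
    intro v
    rw [qf_add]
    exact add_nonneg (qf_frameOp_nonneg F₀ v) (qf_frameOp_nonneg G v)
  have hadj : ∀ i j : Fin d, (j : ℕ) = i + 1 → lam j + μ j < lam i + μ i →
      pre a (i + 1) = pre μ (i + 1) := by
    intro i j hij hlt
    by_contra hne
    have hsl : 0 < pre μ (i + 1) - pre a (i + 1) :=
      sub_pos.2 (lt_of_le_of_ne (hpre _) hne)
    have hlij : lam i ≤ lam j := hlm (Fin.le_def.2 (by omega))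
    have hnij : i ≠ j := by
      intro h
      rw [h] at hij
      omega
    set D := (lam i + μ i) - (lam j + μ j) with hD
    have hD0 : 0 < D := by rw [hD]; linarith
    set δ := min (D / 2) (pre μ (i + 1) - pre a (i + 1)) with hδ
    have hδ0 : 0 < δ := lt_min (by linarith) hsl
    have hδ1 : δ ≤ D / 2 := min_le_left _ _
    have hδ2 : δ ≤ pre μ (i + 1) - pre a (i + 1) := min_le_right _ _
    have h := hopt (mv μ i j δ) ?_ ?_ ?_
    · have e : ∀ l, lam l + mv μ i j δ l = mv (fun l => lam l + μ l) i j δ l := by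
        intro l
        unfold mv
        ring
      simp only [e] at h
      rw [sum_f_mv f (fun l => lam l + μ l) i j hnij δ] at h
      have := sconv_two hf (u := lam i + μ i) (v := lam j + μ j) (δ := δ)
        (add_nonneg (hl0 j) (hμ0 j)) hδ0 (by linarith)
      linarith
    · intro l
      have h1 := hμ0 j
      have h2 := hμ0 l
      unfold mv
      by_cases e1 : l = i
      · subst e1
        rw [if_pos rfl, if_neg hnij]
        linarith
      · rw [if_neg e1]
        split_ifs <;> linarith
    · intro m
      rw [pre_mv]
      have := hpre m
      by_cases h1 : (i : ℕ) < m
      · by_cases h2 : (j : ℕ) < m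
        · rw [if_pos h1, if_pos h2]; linarith
        · have : m = (i : ℕ) + 1 := by omega
          rw [if_pos h1, if_neg h2, this]; linarith
      · rw [if_neg h1, if_neg (by omega)]; linarith
    · rw [sum_mv]; exact hsum
  have hsd : sF ≤ d := by
    rw [hsF]
    exact Matrix.rank_le_width _
  exact core hdk a ha_pos ha_mono lam μ hlm hμ0 hpre hsum hadj sF hsd p c hcanti hcpos s hs0 hsm
    hsl hblock htail
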